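/- There is no irreducible braid system s = (β_1, β_2, β_3) ∈ B_3^3 with finite Hurwitz orbit such that, for some permutation (i, j, k) of (1, 2, 3), e(β_i) ≡ 0 (mod 6), e(β_j) ≡ ±2 (mod 6), and e(β_k) ≡ ±2 (mod 6). Consequently, every irreducible (3,3)-periodic braid system with finite Hurwitz orbit satisfies e(β_1) ≡ ±1, e(β_2) ≡ ±1, e(β_3) ≡ ±1 (mod 6). -/

import Mathlib

open FreeGroup in
/-- The braid relations on `m` strands (generators indexed 0-based by `Fin (m-1)`). -/
def braidRels (m : ℕ) : Set (FreeGroup (Fin (m - 1))) :=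
  {r | ∃ i j : Fin (m - 1), (i.val + 2 ≤ j.val ∨ j.val + 2 ≤ i.val) ∧
        r = of i * of j * (of j * of i)⁻¹} ∪
  {r | ∃ i j : Fin (m - 1), (i.val + 1 = j.val ∨ j.val + 1 = i.val) ∧
        r = of i * of j * of i * (of j * of i * of j)⁻¹}

/-- The braid group on `m` strands. -/
abbrev BraidGroup (m : ℕ) := PresentedGroup (braidRels m)

/-- The Artin generator `σ_i` (1-based index `1 ≤ i ≤ m-1`); junk value `1` out of range. -/
def braidGen (m : ℕ) (i : ℕ) : BraidGroup m :=
  if h : 1 ≤ i ∧ i ≤ m - 1 then PresentedGroup.of ⟨i - 1, by omega⟩ else 1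

/-- A braid is periodic if some positive power of it is central. -/
def IsPeriodic {m : ℕ} (β : BraidGroup m) : Prop :=
  ∃ k : ℕ, 1 ≤ k ∧ β ^ k ∈ Subgroup.center (BraidGroup m)

/-- The elementary Hurwitz move at (0-based) position `i`, as a bijection on `n`-tuples. -/
def hEquiv {G : Type*} [Group G] {n : ℕ} (i : Fin (n - 1)) : Equiv.Perm (Fin n → G) where
  toFun s := fun k =>
    if k.val = i.val then s ⟨i.val + 1, by have := i.isLt; omega⟩
    else if k.val = i.val + 1 then
      (s ⟨i.val + 1, by have := i.isLt; omega⟩)⁻¹ * s ⟨i.val, by have := i.isLt; omega⟩ *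
        s ⟨i.val + 1, by have := i.isLt; omega⟩
    else s k
  invFun t := fun k =>
    if k.val = i.val then
      t ⟨i.val, by have := i.isLt; omega⟩ * t ⟨i.val + 1, by have := i.isLt; omega⟩ *
        (t ⟨i.val, by have := i.isLt; omega⟩)⁻¹
    else if k.val = i.val + 1 then t ⟨i.val, by have := i.isLt; omega⟩
    else t k
  left_inv s := by
    funext k
    have hlt := i.isLt
    rcases k with ⟨kv, hkv⟩
    by_cases h1 : kv = i.val
    · subst h1
      simp [mul_assoc]
    · by_cases h2 : kv = i.val + 1
      · subst h2
        simp
      · simp [h1, h2]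
  right_inv t := by
    funext k
    have hlt := i.isLt
    rcases k with ⟨kv, hkv⟩
    by_cases h1 : kv = i.val
    · subst h1
      simp [mul_assoc]
    · by_cases h2 : kv = i.val + 1
      · subst h2
        simp [mul_assoc]
      · simp [h1, h2]

/-- The (right) Hurwitz action of a word in the generators `σ_1, …, σ_{n-1}` of `B_n`
on `n`-tuples of elements of a group `G`: `hurwitzAct (w₁ * w₂) s = hurwitzAct w₂ (hurwitzAct w₁ s)`. -/
def hurwitzAct {G : Type*} [Group G] {n : ℕ} (w : FreeGroup (Fin (n - 1))) (s : Fin n → G) :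
    Fin n → G :=
  (MulOpposite.unop (FreeGroup.lift (fun i => MulOpposite.op (hEquiv (G := G) (n := n) i)) w)) s

/-- The Hurwitz orbit of a braid system. -/
def hurwitzOrbit {G : Type*} [Group G] {n : ℕ} (s : Fin n → G) : Set (Fin n → G) :=
  {t | ∃ w : FreeGroup (Fin (n - 1)), hurwitzAct w s = t}

/-- The generator `σ_i` (1-based) as a word acting on length-`n` systems. -/
def genWord (n : ℕ) (i : ℕ) : FreeGroup (Fin (n - 1)) :=
  if h : 1 ≤ i ∧ i ≤ n - 1 then FreeGroup.of ⟨i - 1, by omega⟩ else 1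

/-- The pure braid word `c_i = (σ_1⁻¹ ⋯ σ_{i-1}⁻¹) σ_i² (σ_{i-1} ⋯ σ_1)`. -/
def cWord (n : ℕ) (i : ℕ) : FreeGroup (Fin (n - 1)) :=
  ((List.range (i - 1)).map (fun t => (genWord n (t + 1))⁻¹)).prod *
    genWord n i ^ 2 *
    ((List.range (i - 1)).reverse.map (fun t => genWord n (t + 1))).prod

/-- The word `Δ_{(i,j)} = (σ_i σ_{i+1} ⋯ σ_j)(σ_i ⋯ σ_{j-1}) ⋯ (σ_i σ_{i+1})(σ_i)`. -/
def deltaWord (n i j : ℕ) : FreeGroup (Fin (n - 1)) :=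
  ((List.range (j - i + 1)).map (fun t =>
    ((List.range (j - t - i + 1)).map (fun u => genWord n (i + u))).prod)).prod

/-- The exponent-sum homomorphism, valued in `Multiplicative ℤ`. -/
def expSumHom {m : ℕ} : BraidGroup m →* Multiplicative ℤ :=
  PresentedGroup.toGroup (f := fun _ => Multiplicative.ofAdd 1) (by
    rintro r (⟨i, j, -, rfl⟩ | ⟨i, j, -, rfl⟩) <;>
      simp <;> group)

/-- The exponent sum of a braid: `e(σ_i) = 1`. -/
def esum {m : ℕ} (β : BraidGroup m) : ℤ := Multiplicative.toAdd (expSumHom β)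

/-- A braid system is reducible if some non-trivial partition of the index set has all
entries from the two parts commuting. -/
def IsReducible {G : Type*} [Group G] {n : ℕ} (s : Fin n → G) : Prop :=
  ∃ I : Set (Fin n), I.Nonempty ∧ Iᶜ.Nonempty ∧ ∀ i ∈ I, ∀ j ∈ Iᶜ, Commute (s i) (s j)

/-- `x ≡ ±2 (mod 6)`. -/
def PMTwo (x : ℤ) : Prop := Int.ModEq 6 x 2 ∨ Int.ModEq 6 x (-2)

/-- `x ≡ ±1 (mod 6)`. -/
def PMOne (x : ℤ) : Prop := Int.ModEq 6 x 1 ∨ Int.ModEq 6 x (-1)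

/-- A degree 3, length 3 braid system is `(3,3)`-periodic if its triple of exponent sums
mod 6 matches one of the patterns `(0,±2,±2)`, `(±2,0,±2)`, `(±2,±2,0)`, `(±1,±1,±1)`. -/
def Is33Periodic (s : Fin 3 → BraidGroup 3) : Prop :=
  (Int.ModEq 6 (esum (s 0)) 0 ∧ PMTwo (esum (s 1)) ∧ PMTwo (esum (s 2))) ∨
  (PMTwo (esum (s 0)) ∧ Int.ModEq 6 (esum (s 1)) 0 ∧ PMTwo (esum (s 2))) ∨
  (PMTwo (esum (s 0)) ∧ PMTwo (esum (s 1)) ∧ Int.ModEq 6 (esum (s 2)) 0) ∨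
  (PMOne (esum (s 0)) ∧ PMOne (esum (s 1)) ∧ PMOne (esum (s 2)))

abbrev SLZ := Matrix.SpecialLinearGroup (Fin 2) ℤ

/-- trace of an element of `SL(2,ℤ)` -/
def trz (X : SLZ) : ℤ := X.1 0 0 + X.1 1 1

theorem slz_det (X : SLZ) : X.1 0 0 * X.1 1 1 - X.1 0 1 * X.1 1 0 = 1 := by
  have := X.2
  rwa [Matrix.det_fin_two] at this

theorem slz_ext {X Y : SLZ} (h00 : X.1 0 0 = Y.1 0 0) (h01 : X.1 0 1 = Y.1 0 1)
    (h10 : X.1 1 0 = Y.1 1 0) (h11 : X.1 1 1 = Y.1 1 1) : X = Y := by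
  ext i j
  fin_cases i <;> fin_cases j <;> assumption

theorem slz_mul (X Y : SLZ) (i j : Fin 2) :
    (X * Y).1 i j = X.1 i 0 * Y.1 0 j + X.1 i 1 * Y.1 1 j := by
  simp [Matrix.SpecialLinearGroup.coe_mul, Matrix.mul_apply, Fin.sum_univ_two]

theorem slz_inv (X : SLZ) : (X⁻¹).1 0 0 = X.1 1 1 ∧ (X⁻¹).1 0 1 = - X.1 0 1 ∧
    (X⁻¹).1 1 0 = - X.1 1 0 ∧ (X⁻¹).1 1 1 = X.1 0 0 := by
  have : (X⁻¹).1 = Matrix.adjugate X.1 := Matrix.SpecialLinearGroup.coe_inv X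
  rw [this, Matrix.adjugate_fin_two]
  simp

theorem slz_comm_iff (X Y : SLZ) : Commute X Y ↔
    X.1 0 1 * Y.1 1 0 = Y.1 0 1 * X.1 1 0 ∧
    (X.1 0 0 - X.1 1 1) * Y.1 0 1 = (Y.1 0 0 - Y.1 1 1) * X.1 0 1 ∧
    (X.1 0 0 - X.1 1 1) * Y.1 1 0 = (Y.1 0 0 - Y.1 1 1) * X.1 1 0 := by
  constructor
  · intro h
    have h' : X * Y = Y * X := h
    have e : ∀ i j, (X * Y).1 i j = (Y * X).1 i j := fun i j => by rw [h']
    have h00 := e 0 0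
    have h01 := e 0 1
    have h10 := e 1 0
    simp only [slz_mul] at h00 h01 h10
    refine ⟨?_, ?_, ?_⟩ <;> linarith
  · rintro ⟨h1, h2, h3⟩
    show X * Y = Y * X
    apply slz_ext <;> simp only [slz_mul] <;> linarith

/-- conic argument: a trace-zero singular commutator with an elliptic element vanishes -/
theorem slz_ellip (X Y : SLZ) (hy : trz Y ^ 2 < 4)
    (h : trz X ^ 2 + trz Y ^ 2 + trz (X * Y) ^ 2 - trz X * trz Y * trz (X * Y) = 4) :
    Commute X Y := by
  rw [slz_comm_iff]
  have dX := slz_det X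
  have dY := slz_det Y
  simp only [trz, slz_mul] at *
  generalize X.1 0 0 = p at *
  generalize X.1 0 1 = q at *
  generalize X.1 1 0 = r at *
  generalize X.1 1 1 = s at *
  generalize Y.1 0 0 = a at *
  generalize Y.1 0 1 = b at *
  generalize Y.1 1 0 = c at *
  generalize Y.1 1 1 = d at *
  have hdisc : (a - d) ^ 2 + 4 * (b * c) < 0 := by nlinarith
  have hb : b ≠ 0 := by
    rintro rfl
    nlinarith [sq_nonneg (a - d)]
  obtain ⟨D1, hD1⟩ : ∃ D, D = q * c - b * r := ⟨_, rfl⟩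
  obtain ⟨D2, hD2⟩ : ∃ D, D = (p - s) * b - (a - d) * q := ⟨_, rfl⟩
  obtain ⟨D3, hD3⟩ : ∃ D, D = r * (a - d) - c * (p - s) := ⟨_, rfl⟩
  have hdet : D1 ^ 2 + D2 * D3 = 0 := by
    have key : D1 ^ 2 + D2 * D3 = (p + s) ^ 2 * (a * d - b * c) + (a + d) ^ 2 * (p * s - q * r)
      + (p * a + q * c + (r * b + s * d)) ^ 2
      - (p + s) * (a + d) * (p * a + q * c + (r * b + s * d))
      - 4 * ((p * s - q * r) * (a * d - b * c)) := by
      subst hD1 hD2 hD3; ring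
    rw [key, dX, dY]; linarith
  have horth : (a - d) * D1 + c * D2 + b * D3 = 0 := by subst hD1 hD2 hD3; ring
  have hq : b * D1 ^ 2 - (a - d) * D1 * D2 - c * D2 ^ 2 = 0 := by
    linear_combination b * hdet - D2 * horth
  have hsq : (2 * b * D1 - (a - d) * D2) ^ 2 = ((a - d) ^ 2 + 4 * (b * c)) * D2 ^ 2 := by
    linear_combination 4 * b * hq
  have h2 : D2 = 0 := by
    by_contra hne
    have : 0 < D2 ^ 2 := by positivity
    nlinarith [sq_nonneg (2 * b * D1 - (a - d) * D2)]
  have h1 : D1 = 0 := by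
    rw [h2] at hq
    have : b * D1 ^ 2 = 0 := by linarith
    simpa [hb] using this
  have h3 : D3 = 0 := by
    rw [h1, h2] at horth
    have : b * D3 = 0 := by linarith
    simpa [hb] using this
  refine ⟨by linarith, by linarith, by linarith⟩

theorem trz_flip (A B C : SLZ) : trz (A * (C⁻¹ * B * C)) + trz (A * B) =
    - (trz (A * C) * trz (B * C)) + trz C * trz (A * B * C) + trz A * trz B := by
  have dC := slz_det C
  obtain ⟨i1, i2, i3, i4⟩ := slz_inv C
  simp only [trz, slz_mul, i1, i2, i3, i4]
  generalize A.1 0 0 = a1 at *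
  generalize A.1 0 1 = a2 at *
  generalize A.1 1 0 = a3 at *
  generalize A.1 1 1 = a4 at *
  generalize B.1 0 0 = b1 at *
  generalize B.1 0 1 = b2 at *
  generalize B.1 1 0 = b3 at *
  generalize B.1 1 1 = b4 at *
  linear_combination ((a1 + a4) * (b1 + b4) - (a1 * b1 + a2 * b3 + (a3 * b2 + a4 * b4))) * dC

theorem trz_conj (A B : SLZ) : trz (A * B * A⁻¹) = trz B := by
  have dC := slz_det A
  obtain ⟨i1, i2, i3, i4⟩ := slz_inv A
  simp only [trz, slz_mul, i1, i2, i3, i4]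
  linear_combination (B.1 0 0 + B.1 1 1) * dC

theorem trz_comm (A B : SLZ) : trz (A * B) = trz (B * A) := by
  simp only [trz, slz_mul]; ring

theorem trz_inv (A : SLZ) : trz A⁻¹ = trz A := by
  obtain ⟨i1, i2, i3, i4⟩ := slz_inv A
  simp only [trz, i1, i4]; ring

theorem trz_one : trz 1 = 2 := by simp [trz]

/-- commuting pair with prescribed traces must be equal -/
theorem slz_eq_of_comm (A B C : SLZ) (hBC : Commute B C) (hAB : ¬ Commute A B)
    (hAC : ¬ Commute A C) (p : trz (A * B) = -1) (r : trz (A * C) = -1)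
    (t : trz (A * B * C) = -1) : B = C ∧ trz A + trz B = 1 := by
  have dB := slz_det B
  have dC := slz_det C
  have dA := slz_det A
  have hx : trz A = -1 → trz B ≠ 2 := by
    intro h1 h2
    exact hAB (slz_ellip B A (by rw [h1]; norm_num) (by rw [trz_comm B A, h1, h2, p]; norm_num)).symm
  have hns : ¬ (B.1 0 1 = 0 ∧ B.1 1 0 = 0) := by
    rintro ⟨h1, h2⟩
    apply hAB
    rw [h1, h2] at dB
    have : B.1 0 0 = B.1 1 1 := by
      have h : B.1 0 0 * B.1 1 1 = 1 := by linarith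
      rcases Int.mul_eq_one_iff_eq_one_or_neg_one.1 h with ⟨h3, h4⟩ | ⟨h3, h4⟩ <;> rw [h3, h4]
    rw [slz_comm_iff, h1, h2, this]; simp
  have hCs : ¬ (C.1 0 1 = 0 ∧ C.1 1 0 = 0) := by
    rintro ⟨h1, h2⟩
    apply hAC
    rw [h1, h2] at dC
    have : C.1 0 0 = C.1 1 1 := by
      have h : C.1 0 0 * C.1 1 1 = 1 := by linarith
      rcases Int.mul_eq_one_iff_eq_one_or_neg_one.1 h with ⟨h3, h4⟩ | ⟨h3, h4⟩ <;> rw [h3, h4]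
    rw [slz_comm_iff, h1, h2, this]; simp
  obtain ⟨k1, k2, k3⟩ := (slz_comm_iff B C).1 hBC
  suffices h : ∃ α β : ℚ, (C.1 0 0 : ℚ) = α + β * B.1 0 0 ∧ (C.1 1 1 : ℚ) = α + β * B.1 1 1 ∧
      (C.1 0 1 : ℚ) = β * B.1 0 1 ∧ (C.1 1 0 : ℚ) = β * B.1 1 0 by
    obtain ⟨α, β, e1, e2, e3, e4⟩ := h
    obtain ⟨x, hxd⟩ : ∃ x, x = trz A := ⟨_, rfl⟩
    obtain ⟨y, hyd⟩ : ∃ y, y = trz B := ⟨_, rfl⟩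
    rw [← hxd, ← hyd] at hx ⊢
    have f1 : α * x - β = (-1 : ℚ) := by
      have h1 : (trz (A * C) : ℚ) = α * x + β * trz (A * B) := by
        rw [hxd]; simp only [trz, slz_mul]; push_cast; rw [e1, e2, e3, e4]; ring
      rw [r, p] at h1; push_cast at h1; linarith
    have dBq : (B.1 0 0 : ℚ) * B.1 1 1 - B.1 0 1 * B.1 1 0 = 1 := by exact_mod_cast dB
    have dCq : (C.1 0 0 : ℚ) * C.1 1 1 - C.1 0 1 * C.1 1 0 = 1 := by exact_mod_cast dC
    have f2 : - α + β * (- y - x) = (-1 : ℚ) := by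
      have h1 : (trz (A * B * C) : ℚ) = α * trz (A * B) + β * (y * trz (A * B) - x) := by
        rw [hxd, hyd]; simp only [trz, slz_mul]; push_cast; rw [e1, e2, e3, e4]
        linear_combination (-β * (A.1 0 0 + A.1 1 1)) * dBq
      rw [t, p] at h1; push_cast at h1; linarith
    have f3 : α ^ 2 + α * β * y + β ^ 2 = 1 := by
      rw [e1, e2, e3, e4] at dCq
      rw [hyd]; simp only [trz]; push_cast
      linear_combination dCq - β ^ 2 * dBq
    have g1 : β = 1 + α * x := by linarith
    rw [g1] at f2 f3
    have g2 : α * (1 + x ^ 2 + x * y) = 1 - x - y := by linarith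
    -- the product relation
    have g3 : (1 - x - y : ℚ) * ((1 + x) * (1 + x ^ 2 + x * y)) = 0 := by
      have : (1 - x - y : ℚ) ^ 2 + (1 - x - y) * (1 + x) * y + (1 + x) ^ 2
          = (1 + x ^ 2 + x * y) ^ 2 := by
        rw [← g2]
        have : (1 + x : ℚ) = (1 + α * x) * (1 + x ^ 2 + x * y) := by
          linear_combination (-x : ℚ) * g2
        rw [this]
        linear_combination (1 + x ^ 2 + x * y : ℚ) ^ 2 * f3
      linear_combination this
    have g3' : (1 - x - y) * ((1 + x) * (1 + x ^ 2 + x * y)) = 0 := by exact_mod_cast g3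
    have hβ : β ≠ 0 := by
      rintro hβ
      apply hCs
      rw [hβ] at e3 e4
      constructor
      · have : (C.1 0 1 : ℚ) = 0 := by linarith
        exact_mod_cast this
      · have : (C.1 1 0 : ℚ) = 0 := by linarith
        exact_mod_cast this
    have hDne : (1 + x ^ 2 + x * y) ≠ 0 := by
      intro hD
      have hD' : (1 + x ^ 2 + x * y : ℚ) = 0 := by exact_mod_cast hD
      rw [hD'] at g2
      have hs : (1 - x - y : ℚ) = 0 := by linarith
      have hs' : 1 - x - y = 0 := by exact_mod_cast hs
      have hy' : y = 1 - x := by linarith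
      have hx' : x = -1 := by rw [hy'] at hD; linarith
      exact hx hx' (by omega)
    have hs : 1 - x - y = 0 := by
      rcases mul_eq_zero.1 g3' with h | h
      · exact h
      rcases mul_eq_zero.1 h with h | h
      · exfalso
        have hx' : x = -1 := by omega
        have hy2 := hx hx'
        subst hx'
        push_cast at g2 g1
        have hy2' : (2 - y : ℚ) ≠ 0 := by
          intro h; apply hy2
          have : (y : ℚ) = 2 := by linarith
          exact_mod_cast this
        have : (α - 1) * (2 - y : ℚ) = 0 := by linarith
        have : α - 1 = 0 := by simpa [hy2'] using this
        apply hβ; rw [g1]; linarith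
      · exact absurd h hDne
    refine ⟨?_, by omega⟩
    have hα : α = 0 := by
      have hs' : (1 - x - y : ℚ) = 0 := by exact_mod_cast hs
      have hD' : (1 + x ^ 2 + x * y : ℚ) ≠ 0 := by exact_mod_cast hDne
      rw [hs'] at g2
      exact (mul_eq_zero.1 g2).resolve_right hD'
    have hβ1 : β = 1 := by rw [g1, hα]; ring
    rw [hα, hβ1] at e1 e2
    rw [hβ1] at e3 e4
    apply slz_ext
    · have : (B.1 0 0 : ℚ) = C.1 0 0 := by linarith
      exact_mod_cast this
    · have : (B.1 0 1 : ℚ) = C.1 0 1 := by linarith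
      exact_mod_cast this
    · have : (B.1 1 0 : ℚ) = C.1 1 0 := by linarith
      exact_mod_cast this
    · have : (B.1 1 1 : ℚ) = C.1 1 1 := by linarith
      exact_mod_cast this
  have k1q : (B.1 0 1 : ℚ) * C.1 1 0 = C.1 0 1 * B.1 1 0 := by exact_mod_cast k1
  have k2q : ((B.1 0 0 : ℚ) - B.1 1 1) * C.1 0 1 = (C.1 0 0 - C.1 1 1) * B.1 0 1 := by
    exact_mod_cast k2
  have k3q : ((B.1 0 0 : ℚ) - B.1 1 1) * C.1 1 0 = (C.1 0 0 - C.1 1 1) * B.1 1 0 := by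
    exact_mod_cast k3
  by_cases hb : B.1 0 1 = 0
  · have hc : (B.1 1 0 : ℚ) ≠ 0 := by
      intro h
      exact hns ⟨hb, by exact_mod_cast h⟩
    refine ⟨C.1 0 0 - C.1 1 0 / B.1 1 0 * B.1 0 0, C.1 1 0 / B.1 1 0, by ring, ?_, ?_, ?_⟩
    · field_simp; linarith
    · field_simp; linarith
    · field_simp
  · have hb' : (B.1 0 1 : ℚ) ≠ 0 := by exact_mod_cast hb
    refine ⟨C.1 0 0 - C.1 0 1 / B.1 0 1 * B.1 0 0, C.1 0 1 / B.1 0 1, by ring, ?_, ?_, ?_⟩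
    · field_simp; linarith
    · field_simp
    · field_simp; linarith

/-- The combinatorial core. -/
theorem slz_core (P : SLZ → SLZ → SLZ → Prop)
    (m1 : ∀ A B C, P A B C → P (A * B * A⁻¹) A C)
    (m1' : ∀ A B C, P A B C → P B (B⁻¹ * A * B) C)
    (m2 : ∀ A B C, P A B C → P A C (C⁻¹ * B * C))
    (ib : ∀ A B C, P A B C → ¬ (Commute A B ∧ Commute B C))
    (ic : ∀ A B C, P A B C → ¬ (Commute A C ∧ Commute B C))
    (t1 : ∀ A B C, P A B C → ¬ Commute A B → trz (A * B) = -1)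
    (t2 : ∀ A B C, P A B C → ¬ Commute B C → trz (B * C) = -1)
    (t3 : ∀ A B C, P A B C → A * B * C = 1 ∨ trz (A * B * C) = -1)
    (A B C : SLZ) (h : P A B C) : False := by
  have t2' : ∀ A B C, P A B C → ¬ Commute A C → trz (A * C) = -1 :=
    fun A B C h hn => t2 _ _ _ (m1 A B C h) hn
  -- commuting pair at the end: equality
  have e1 : ∀ A B C, P A B C → Commute B C → B = C ∧ trz A + trz B = 1 := by
    intro A B C h hc
    have hab : ¬ Commute A B := fun h' => ib _ _ _ h ⟨h', hc⟩
    have hac : ¬ Commute A C := fun h' => ic _ _ _ h ⟨h', hc⟩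
    refine slz_eq_of_comm A B C hc hab hac (t1 _ _ _ h hab) (t2' _ _ _ h hac) ?_
    rcases t3 _ _ _ h with h1 | h1
    · exfalso
      apply hab
      have : A = (B * C)⁻¹ := by
        rw [eq_inv_iff_mul_eq_one, ← mul_assoc]; exact h1
      rw [this]
      exact (((Commute.refl B).mul_right hc).inv_right).symm
    · exact h1
  have c1 : ∀ A B C, P A B C → ¬ Commute B C := by
    intro A B C h hc
    have hab : ¬ Commute A B := fun h' => ib _ _ _ h ⟨h', hc⟩
    have hac : ¬ Commute A C := fun h' => ic _ _ _ h ⟨h', hc⟩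
    have ht : trz (A * B * C) = -1 := by
      rcases t3 _ _ _ h with h1 | h1
      · exfalso
        apply hab
        have : A = (B * C)⁻¹ := by
          rw [eq_inv_iff_mul_eq_one, ← mul_assoc]; exact h1
        rw [this]
        exact (((Commute.refl B).mul_right hc).inv_right).symm
      · exact h1
    have hp := t1 _ _ _ h hab
    obtain ⟨hBC, hs⟩ := e1 _ _ _ h hc
    subst hBC
    have hP' := m1 _ _ _ h
    have hn : ¬ Commute (A * B * A⁻¹) B := by
      intro hcc
      obtain ⟨he, -⟩ := e1 _ _ _ (m1 _ _ _ hP') hcc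
      apply hab
      show A * B = B * A
      exact mul_inv_eq_iff_eq_mul.1 he
    have hq := t2' _ _ _ hP' hn
    have hfl := trz_flip B B A⁻¹
    rw [inv_inv, trz_inv, trz_comm B (A * B * A⁻¹), hq] at hfl
    have hBi : trz (B * A⁻¹) = trz A * trz B - trz (A * B) := by
      obtain ⟨i1, i2, i3, i4⟩ := slz_inv A
      simp only [trz, slz_mul, i1, i2, i3, i4]; ring
    have hBB : trz (B * B) = trz B ^ 2 - 2 := by
      have := slz_det B
      simp only [trz, slz_mul]; linear_combination (-2) * this
    have hBBi : trz (B * B * A⁻¹) = trz B * trz (B * A⁻¹) - trz A := by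
      have := slz_det B
      obtain ⟨i1, i2, i3, i4⟩ := slz_inv A
      simp only [trz, slz_mul, i1, i2, i3, i4]; linear_combination (-(A.1 0 0 + A.1 1 1)) * this
    rw [hBBi, hBi, hBB, hp] at hfl
    have hx : trz A = 1 - trz B := by linarith
    rw [hx] at hfl
    have hy : trz B = -1 := by ring_nf at hfl; linarith
    exact hab (slz_ellip A B (by rw [hy]; norm_num) (by rw [hx, hy, hp]; norm_num))
  have c2 : ∀ A B C, P A B C → ¬ Commute A C := fun A B C h => c1 _ _ _ (m1 _ _ _ h)
  have c3 : ∀ A B C, P A B C → ¬ Commute A B := by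
    intro A B C h hc
    refine c1 _ _ _ (m1' _ _ _ (m2 _ _ _ h)) ?_
    show _ * _ = _ * _
    have hc' : A * B = B * A := hc
    calc C⁻¹ * A * C * (C⁻¹ * B * C) = C⁻¹ * (A * B) * C := by group
      _ = C⁻¹ * (B * A) * C := by rw [hc']
      _ = _ := by group
  have hp := t1 _ _ _ h (c3 _ _ _ h)
  have hq := t2 _ _ _ h (c1 _ _ _ h)
  have hr := t2' _ _ _ h (c2 _ _ _ h)
  rcases t3 _ _ _ h with h1 | ht
  · have hx : trz A = -1 := by
      have : A = (B * C)⁻¹ := by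
        rw [eq_inv_iff_mul_eq_one, ← mul_assoc]; exact h1
      rw [this, trz_inv, hq]
    have hz : trz C = -1 := by
      have : C = (A * B)⁻¹ := by
        rw [eq_inv_iff_mul_eq_one, mul_eq_one_comm]; exact h1
      rw [this, trz_inv, hp]
    exact c2 _ _ _ h (slz_ellip A C (by rw [hz]; norm_num) (by rw [hx, hz, hr]; norm_num))
  · have E1 : trz A * trz B = trz C - 1 := by
      have hm := m2 _ _ _ h
      have h' := t2' _ _ _ hm (c2 _ _ _ hm)
      have := trz_flip A B C
      rw [h', hp, hq, hr, ht] at this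
      linarith
    have E2 : trz A * trz C = trz B - 1 := by
      have hm := m1' _ _ _ h
      have h' := t2 _ _ _ hm (c1 _ _ _ hm)
      have := trz_flip C A B
      rw [trz_comm C (B⁻¹ * A * B), h', trz_comm C A, hr, hp, trz_comm C B, hq, mul_assoc C A B,
        trz_comm C (A * B), ht] at this
      linarith
    have E3 : trz B * trz C = trz A - 1 := by
      have hm := m1 _ _ _ h
      have h' := t2' _ _ _ hm (c2 _ _ _ hm)
      have := trz_flip B (A⁻¹ * (A * C * A⁻¹) * A) A
      have h1 : A⁻¹ * (A * C * A⁻¹) * A = C := by group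
      rw [h1] at this
      have h2 : trz (B * (A⁻¹ * C * A)) = trz (A * B * A⁻¹ * C) := by
        rw [← trz_conj A (B * (A⁻¹ * C * A))]; congr 1; group
      rw [h2, h', hq, trz_comm B A, hp, trz_comm C A, hr, trz_comm (B * C) A, ← mul_assoc, ht]
        at this
      linarith
    have F1 : (trz A + 1) * (trz B - trz C) = 0 := by linarith
    have key : trz A = -1 ∨ trz B = -1 := by
      by_contra hcon
      push Not at hcon
      have a1 : trz B = trz C := by
        rcases mul_eq_zero.1 F1 with h | h
        · exact absurd (by linarith) hcon.1
        · linarith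
      have F2 : (trz B + 1) * (trz A - trz C) = 0 := by linarith
      have a2 : trz A = trz C := by
        rcases mul_eq_zero.1 F2 with h | h
        · exact absurd (by linarith) hcon.2
        · linarith
      rw [a1, a2] at E1
      nlinarith [sq_nonneg (trz C), sq_nonneg (trz C - 1)]
    rcases key with k | k
    · apply c3 _ _ _ h
      refine (slz_ellip B A (by rw [k]; norm_num) ?_).symm
      rw [trz_comm B A, hp, k]
      rw [k] at E1 E3
      have : trz C = 1 - trz B := by linarith
      rw [this] at E3
      linarith
    · apply c3 _ _ _ h
      refine (slz_ellip A B (by rw [k]; norm_num) ?_)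
      rw [hp, k]
      rw [k] at E1 E2
      have : trz C = 1 - trz A := by linarith
      rw [this] at E2
      linarith
/-! ### The braid group `B_3` -/

abbrev B3 := BraidGroup 3

def bs1 : B3 := PresentedGroup.of (0 : Fin 2)
def bs2 : B3 := PresentedGroup.of (1 : Fin 2)

theorem b3_braid : bs1 * bs2 * bs1 = bs2 * bs1 * bs2 := by
  have h : (FreeGroup.of (0 : Fin 2) * FreeGroup.of 1 * FreeGroup.of 0 *
      (FreeGroup.of 1 * FreeGroup.of 0 * FreeGroup.of 1)⁻¹ : FreeGroup (Fin (3 - 1))) ∈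
      braidRels 3 := by
    right
    exact ⟨0, 1, Or.inl rfl, rfl⟩
  have h2 := PresentedGroup.one_of_mem h
  rw [map_mul, map_inv, mul_inv_eq_one] at h2
  simp only [map_mul] at h2
  exact h2

/-- the matrices of the generators -/
def mat1 : SLZ := ⟨!![1, 1; 0, 1], by simp [Matrix.det_fin_two]⟩
def mat2 : SLZ := ⟨!![1, 0; -1, 1], by simp [Matrix.det_fin_two]⟩

theorem mat1_val : mat1.1 = !![1, 1; 0, 1] := rfl
theorem mat2_val : mat2.1 = !![1, 0; -1, 1] := rfl

theorem mat_braid : mat1 * mat2 * mat1 = mat2 * mat1 * mat2 := by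
  apply slz_ext <;> simp [slz_mul, mat1_val, mat2_val, -Matrix.SpecialLinearGroup.coe_mul]

def genMat (i : Fin (3 - 1)) : SLZ := if i.val = 0 then mat1 else mat2

/-- The standard homomorphism `B_3 → SL(2,ℤ)` -/
def brep : B3 →* SLZ := PresentedGroup.toGroup (f := genMat) (by
  rintro r (⟨i, j, h, rfl⟩ | ⟨i, j, h, rfl⟩)
  · have := i.isLt
    have := j.isLt
    omega
  · have hi := i.isLt
    have hj := j.isLt
    rw [map_mul, map_inv, mul_inv_eq_one]
    simp only [map_mul, FreeGroup.lift_apply_of]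
    rcases h with h | h
    · have h0 : i.val = 0 := by omega
      have h1 : ¬ j.val = 0 := by omega
      simp only [genMat, h0, h1, if_true, if_false]
      exact mat_braid
    · have h0 : j.val = 0 := by omega
      have h1 : ¬ i.val = 0 := by omega
      simp only [genMat, h0, h1, if_true, if_false]
      exact mat_braid.symm)

theorem brep_1 : brep bs1 = mat1 := PresentedGroup.toGroup.of _
theorem brep_2 : brep bs2 = mat2 := PresentedGroup.toGroup.of _

theorem esum_mul (a b : B3) : esum (a * b) = esum a + esum b := by simp [esum]
theorem esum_inv (a : B3) : esum a⁻¹ = - esum a := by simp [esum]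
theorem esum_one : esum (1 : B3) = 0 := by simp [esum]
theorem esum_zpow (a : B3) (k : ℤ) : esum (a ^ k) = k * esum a := by simp [esum]
theorem esum_pow (a : B3) (k : ℕ) : esum (a ^ k) = k * esum a := by simp [esum]
theorem esum_1 : esum bs1 = 1 := by
  show Multiplicative.toAdd (expSumHom (PresentedGroup.of _)) = 1
  rw [expSumHom, PresentedGroup.toGroup.of]; rfl
theorem esum_2 : esum bs2 = 1 := by
  show Multiplicative.toAdd (expSumHom (PresentedGroup.of _)) = 1
  rw [expSumHom, PresentedGroup.toGroup.of]; rfl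

def bx : B3 := bs1 * bs2 * bs1
def bby : B3 := bs1 * bs2
def bz : B3 := bx * bx

theorem bz_eq_y : bz = bby * bby * bby := by
  have h := b3_braid
  simp only [bz, bx, bby]
  calc bs1 * bs2 * bs1 * (bs1 * bs2 * bs1) = bs1 * bs2 * bs1 * (bs2 * bs1 * bs2) := by rw [← h]
    _ = _ := by group

theorem bs1_eq : bs1 = bby⁻¹ * bx := by simp only [bx, bby]; group
theorem bs2_eq : bs2 = bx⁻¹ * bby * bby := by simp only [bx, bby]; group

theorem bz_x : Commute bz bx := by
  show _ = _
  simp only [bz]; group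
theorem bz_y : Commute bz bby := by
  show _ = _
  simp only [bz_eq_y]; group

theorem bz_central (g : B3) : Commute bz g := by
  have h1 : Commute bz bs1 := by
    rw [bs1_eq]; exact (bz_y.inv_right).mul_right bz_x
  have h2 : Commute bz bs2 := by
    rw [bs2_eq]; exact ((bz_x.inv_right).mul_right bz_y).mul_right bz_y
  have hg : g ∈ Subgroup.closure (Set.range (PresentedGroup.of (rels := braidRels 3))) := by
    rw [PresentedGroup.closure_range_of]; trivial
  induction hg using Subgroup.closure_induction with
  | mem x hx =>
    obtain ⟨i, rfl⟩ := hx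
    have : i = 0 ∨ i = 1 := by fin_cases i <;> simp
    rcases this with rfl | rfl
    · exact h1
    · exact h2
  | one => exact Commute.one_right _
  | mul x y _ _ hx hy => exact hx.mul_right hy
  | inv x _ hx => exact hx.inv_right

/-- positive words in `xy` and `xy²` -/
inductive PosW : B3 → Prop
  | one : PosW 1
  | l (w : B3) : PosW w → PosW (bx * bby * w)
  | r (w : B3) : PosW w → PosW (bx * bby * bby * w)

def NF (g : B3) : Prop := ∃ (w : B3) (u v : B3) (k : ℤ), PosW w ∧
  (u = 1 ∨ u = bby ∨ u = bby * bby) ∧ (v = 1 ∨ v = bx) ∧ g = u * w * v * bz ^ k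

theorem NF_z {g : B3} (k : ℤ) (h : NF g) : NF (bz ^ k * g) := by
  obtain ⟨w, u, v, l, hw, hu, hv, rfl⟩ := h
  refine ⟨w, u, v, k + l, hw, hu, hv, ?_⟩
  rw [((bz_central _).zpow_left k).eq, mul_assoc, ← zpow_add, add_comm l]

theorem NF_y {g : B3} (h : NF g) : NF (bby * g) := by
  obtain ⟨w, u, v, l, hw, hu, hv, rfl⟩ := h
  rcases hu with rfl | rfl | rfl
  · exact ⟨w, bby, v, l, hw, by simp, hv, by group⟩
  · exact ⟨w, bby * bby, v, l, hw, by simp, hv, by group⟩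
  · have : bby * (bby * bby * w * v * bz ^ l) = bz ^ (1 : ℤ) * (1 * w * v * bz ^ l) := by
      rw [zpow_one, bz_eq_y]; group
    rw [this]
    exact NF_z 1 ⟨w, 1, v, l, hw, by simp, hv, rfl⟩

theorem NF_x {g : B3} (h : NF g) : NF (bx * g) := by
  obtain ⟨w, u, v, l, hw, hu, hv, rfl⟩ := h
  rcases hu with rfl | rfl | rfl
  · cases hw with
    | one =>
      rcases hv with rfl | rfl
      · exact ⟨1, 1, bx, l, PosW.one, by simp, by simp, by group⟩
      · have : bx * (1 * 1 * bx * bz ^ l) = bz ^ (1 : ℤ) * (1 * 1 * 1 * bz ^ l) := by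
          rw [zpow_one]; nth_rw 2 [bz]; group
        rw [this]
        exact NF_z 1 ⟨1, 1, 1, l, PosW.one, by simp, by simp, rfl⟩
    | l w hw =>
      have : bx * (1 * (bx * bby * w) * v * bz ^ l) = bz ^ (1 : ℤ) * (bby * w * v * bz ^ l) := by
        rw [zpow_one]; nth_rw 2 [bz]; group
      rw [this]
      exact NF_z 1 ⟨w, _, v, l, hw, by simp, hv, rfl⟩
    | r w hw =>
      have : bx * (1 * (bx * bby * bby * w) * v * bz ^ l) =
          bz ^ (1 : ℤ) * (bby * bby * w * v * bz ^ l) := by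
        rw [zpow_one]; nth_rw 2 [bz]; group
      rw [this]
      exact NF_z 1 ⟨w, _, v, l, hw, by simp, hv, rfl⟩
  · exact ⟨_, 1, v, l, PosW.l w hw, by simp, hv, by group⟩
  · exact ⟨_, 1, v, l, PosW.r w hw, by simp, hv, by group⟩

theorem NF_xinv {g : B3} (h : NF g) : NF (bx⁻¹ * g) := by
  have : bx⁻¹ * g = bz ^ (-1 : ℤ) * (bx * g) := by rw [zpow_neg_one, bz]; group
  rw [this]; exact NF_z _ (NF_x h)

theorem NF_yinv {g : B3} (h : NF g) : NF (bby⁻¹ * g) := by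
  have : bby⁻¹ * g = bz ^ (-1 : ℤ) * (bby * (bby * g)) := by rw [zpow_neg_one, bz_eq_y]; group
  rw [this]; exact NF_z _ (NF_y (NF_y h))

theorem NF_all (g : B3) : NF g := by
  have hg : g ∈ Subgroup.closure (Set.range (PresentedGroup.of (rels := braidRels 3))) := by
    rw [PresentedGroup.closure_range_of]; trivial
  induction hg using Subgroup.closure_induction_left with
  | one => exact ⟨1, 1, 1, 0, PosW.one, by simp, by simp, by simp⟩
  | mul_left x hx y _ ih =>
    obtain ⟨i, rfl⟩ := hx
    have : i = 0 ∨ i = 1 := by fin_cases i <;> simp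
    rcases this with rfl | rfl
    · show NF (bs1 * y)
      rw [bs1_eq, mul_assoc]; exact NF_yinv (NF_x ih)
    · show NF (bs2 * y)
      rw [bs2_eq, mul_assoc, mul_assoc]; exact NF_xinv (NF_y (NF_y ih))
  | inv_mul_cancel x hx y _ ih =>
    obtain ⟨i, rfl⟩ := hx
    have : i = 0 ∨ i = 1 := by fin_cases i <;> simp
    rcases this with rfl | rfl
    · show NF (bs1⁻¹ * y)
      rw [bs1_eq, mul_inv_rev, inv_inv, mul_assoc]; exact NF_xinv (NF_y ih)
    · show NF (bs2⁻¹ * y)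
      rw [bs2_eq, mul_inv_rev, mul_inv_rev, inv_inv, mul_assoc, mul_assoc]
      exact NF_yinv (NF_yinv (NF_x ih))

/-- sign pattern of positive words -/
def Pat (p q r s : ℤ) : Prop := 1 ≤ p ∧ q ≤ 0 ∧ r ≤ 0 ∧ 1 ≤ s

theorem brep_x : (brep bx).1 = !![0, 1; -1, 0] := by
  simp only [bx, map_mul, brep_1, brep_2]
  ext i j
  fin_cases i <;> fin_cases j <;> simp [mat1_val, mat2_val]

theorem brep_y : (brep bby).1 = !![0, 1; -1, 1] := by
  simp only [bby, map_mul, brep_1, brep_2]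
  ext i j
  fin_cases i <;> fin_cases j <;> simp [mat1_val, mat2_val]

theorem brep_z : brep bz = -1 := by
  simp only [bz, map_mul]
  apply slz_ext <;> simp [slz_mul, brep_x]

theorem PosW_pat {w : B3} (h : PosW w) :
    w = 1 ∨ ((∃ ε : ℤ, (ε = 1 ∨ ε = -1) ∧ Pat (ε * (brep w).1 0 0) (ε * (brep w).1 0 1)
      (ε * (brep w).1 1 0) (ε * (brep w).1 1 1) ∧
      ε * (brep w).1 0 1 + ε * (brep w).1 1 0 ≤ -1)) := by
  induction h with
  | one => exact Or.inl rfl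
  | l w _ ih =>
    right
    rcases ih with rfl | ⟨ε, hε, hp, hs⟩
    · refine ⟨-1, by simp, ?_⟩
      simp [Pat, slz_mul, brep_x, brep_y]
    · refine ⟨-ε, by omega, ?_⟩
      simp only [Pat, map_mul, slz_mul, brep_x, brep_y] at hp hs ⊢
      rcases hε with rfl | rfl <;> simp at hp hs ⊢ <;> omega
  | r w _ ih =>
    right
    rcases ih with rfl | ⟨ε, hε, hp, hs⟩
    · refine ⟨-1, by simp, ?_⟩
      simp [Pat, slz_mul, brep_x, brep_y]
    · refine ⟨-ε, by omega, ?_⟩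
      simp only [Pat, map_mul, slz_mul, brep_x, brep_y] at hp hs ⊢
      rcases hε with rfl | rfl <;> simp at hp hs ⊢ <;> omega

theorem negone_zpow (k : ℤ) : ((-1 : SLZ) ^ k) = 1 ∨ ((-1 : SLZ) ^ k) = -1 := by
  rcases Int.even_or_odd k with h | h
  · left; exact h.neg_one_zpow
  · right; obtain ⟨m, rfl⟩ := h
    rw [zpow_add, zpow_mul]; simp

theorem brep_scalar {g : B3} (h1 : (brep g).1 0 1 = 0) (h2 : (brep g).1 1 0 = 0)
    (h3 : (brep g).1 0 0 = (brep g).1 1 1) : ∃ k : ℤ, g = bz ^ k := by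
  obtain ⟨w, u, v, k, hw, hu, hv, rfl⟩ := NF_all g
  refine ⟨k, ?_⟩
  suffices h : u * w * v = 1 by rw [h, one_mul]
  have hz : brep (u * w * v * bz ^ k) = brep (u * w * v) ∨
      brep (u * w * v * bz ^ k) = - brep (u * w * v) := by
    rw [map_mul, map_zpow, brep_z]
    rcases negone_zpow k with h | h <;> rw [h] <;> simp
  have h' : (brep (u * w * v)).1 0 1 = 0 ∧ (brep (u * w * v)).1 1 0 = 0 ∧
      (brep (u * w * v)).1 0 0 = (brep (u * w * v)).1 1 1 := by
    rcases hz with h | h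
    · rw [h] at h1 h2 h3; exact ⟨h1, h2, h3⟩
    · rw [h] at h1 h2 h3
      simp only [Matrix.SpecialLinearGroup.coe_neg, Matrix.neg_apply] at h1 h2 h3
      refine ⟨?_, ?_, ?_⟩ <;> omega
  obtain ⟨g1, g2, g3⟩ := h'
  rcases PosW_pat hw with rfl | ⟨ε, hε, hp, hs⟩
  · rcases hu with rfl | rfl | rfl <;> rcases hv with rfl | rfl <;>
      simp [slz_mul, brep_x, brep_y] at g1 g2 g3 ⊢
  · exfalso
    simp only [Pat] at hp
    rcases hu with rfl | rfl | rfl <;> rcases hv with rfl | rfl <;>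
      simp [slz_mul, brep_x, brep_y] at g1 g2 g3 <;>
      rcases hε with rfl | rfl <;> omega

/-! ### Normalised representation -/

theorem esum_z : esum bz = 6 := by
  simp only [bz, bx, esum_mul, esum_1, esum_2]; norm_num

def Nr (g : B3) : SLZ := (-1 : SLZ) ^ (esum g / 2) * brep g

theorem negone_comm (k : ℤ) (X : SLZ) : Commute ((-1 : SLZ) ^ k) X :=
  (Commute.neg_one_left X).zpow_left k

theorem Nr_mul {a : B3} (ha : Even (esum a)) (b : B3) : Nr (a * b) = Nr a * Nr b := by
  obtain ⟨m, hm⟩ := ha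
  have : esum (a * b) / 2 = esum a / 2 + esum b / 2 := by rw [esum_mul]; omega
  simp only [Nr]
  rw [this, zpow_add, map_mul, mul_assoc, mul_assoc, ← mul_assoc _ (brep a),
    (negone_comm _ (brep a)).eq, mul_assoc]

theorem Nr_one : Nr 1 = 1 := by simp [Nr, esum_one]

theorem Nr_inv {a : B3} (ha : Even (esum a)) : Nr a⁻¹ = (Nr a)⁻¹ := by
  rw [eq_inv_iff_mul_eq_one, mul_eq_one_comm, ← Nr_mul ha, mul_inv_cancel, Nr_one]

theorem Nr_comm_iff (a b : B3) : Commute (Nr a) (Nr b) ↔ Commute (brep a) (brep b) := by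
  constructor
  · intro h
    have e : ∀ g, brep g = ((-1 : SLZ) ^ (esum g / 2))⁻¹ * Nr g := fun g => by simp [Nr]
    rw [e a, e b]
    exact (((negone_comm _ _).inv_left).mul_left
      (((negone_comm _ _).inv_left.symm).mul_right h))
  · intro h
    exact (negone_comm _ _).mul_left ((negone_comm _ _).symm.mul_right h)

theorem comm_of_brep {a b : B3} (h : Commute (brep a) (brep b)) : Commute a b := by
  have h1 : brep (a * b * (b * a)⁻¹) = 1 := by
    rw [map_mul, map_inv, mul_inv_eq_one, map_mul, map_mul]; exact h
  obtain ⟨k, hk⟩ := brep_scalar (g := a * b * (b * a)⁻¹) (by rw [h1]; simp) (by rw [h1]; simp)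
    (by rw [h1]; simp)
  have h2 := congrArg esum hk
  rw [esum_zpow, esum_z, esum_mul, esum_inv, esum_mul, esum_mul] at h2
  have hk0 : k = 0 := by omega
  rw [hk0, zpow_zero, mul_inv_eq_one] at hk
  exact hk

theorem Nr_scalar {g : B3} (he : Even (esum g)) (h1 : (brep g).1 0 1 = 0)
    (h2 : (brep g).1 1 0 = 0) (h3 : (brep g).1 0 0 = (brep g).1 1 1) : Nr g = 1 := by
  obtain ⟨k, rfl⟩ := brep_scalar h1 h2 h3
  have : esum (bz ^ k) / 2 = k * 3 := by rw [esum_zpow, esum_z]; omega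
  rw [Nr, this, map_zpow, brep_z, ← zpow_add]
  have : Even (k * 3 + k) := ⟨2 * k, by ring⟩
  exact this.neg_one_zpow

theorem slz_trans {M X Y : SLZ} (hM : ¬ (M.1 0 1 = 0 ∧ M.1 1 0 = 0 ∧ M.1 0 0 = M.1 1 1))
    (hX : Commute M X) (hY : Commute M Y) : Commute X Y := by
  rw [slz_comm_iff] at *
  obtain ⟨x1, x2, x3⟩ := hX
  obtain ⟨y1, y2, y3⟩ := hY
  have hM' : ¬ (M.1 0 1 = 0 ∧ M.1 1 0 = 0 ∧ M.1 0 0 - M.1 1 1 = 0) := by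
    rintro ⟨a, b, c⟩; exact hM ⟨a, b, by omega⟩
  generalize M.1 0 1 = m1 at *
  generalize M.1 1 0 = m2 at *
  generalize M.1 0 0 - M.1 1 1 = m3 at *
  generalize X.1 0 1 = a1 at *
  generalize X.1 1 0 = a2 at *
  generalize X.1 0 0 - X.1 1 1 = a3 at *
  generalize Y.1 0 1 = b1 at *
  generalize Y.1 1 0 = b2 at *
  generalize Y.1 0 0 - Y.1 1 1 = b3 at *
  by_cases h1 : m1 = 0
  · by_cases h2 : m2 = 0
    · have h3 : m3 ≠ 0 := fun h3 => hM' ⟨h1, h2, h3⟩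
      subst h1 h2
      have e1 : a1 = 0 := by simpa [h3] using x2
      have e2 : a2 = 0 := by simpa [h3] using x3
      have e3 : b1 = 0 := by simpa [h3] using y2
      have e4 : b2 = 0 := by simpa [h3] using y3
      subst e1 e2 e3 e4
      simp
    · refine ⟨?_, ?_, ?_⟩ <;> apply mul_left_cancel₀ h2
      · linear_combination a2 * y1 - b2 * x1
      · subst h1
        have e1 : a1 = 0 := by
          have : a1 * m2 = 0 := by linarith
          simpa [h2] using this
        have e2 : b1 = 0 := by
          have : b1 * m2 = 0 := by linarith
          simpa [h2] using this
        subst e1 e2; ring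
      · linear_combination a2 * y3 - b2 * x3
  · have k : a1 * b2 = b1 * a2 := by
      apply mul_left_cancel₀ h1
      linear_combination a1 * y1 - b1 * x1
    refine ⟨k, ?_, ?_⟩ <;> apply mul_left_cancel₀ h1
    · linear_combination a1 * y2 - b1 * x2
    · linear_combination m3 * k + a2 * y2 - b2 * x2

theorem slz_pow_form (M : SLZ) (ht : 4 ≤ trz M ^ 2) (n : ℕ) : ∃ u v : ℤ, |v| + 1 ≤ |u| ∧
    (M ^ (n + 1)).1 0 0 = u * M.1 0 0 + v ∧ (M ^ (n + 1)).1 1 1 = u * M.1 1 1 + v ∧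
    (M ^ (n + 1)).1 0 1 = u * M.1 0 1 ∧ (M ^ (n + 1)).1 1 0 = u * M.1 1 0 := by
  have ht' : 2 ≤ |trz M| := by
    by_contra h
    push Not at h
    have h0 := abs_nonneg (trz M)
    rw [← sq_abs] at ht
    nlinarith
  induction n with
  | zero => exact ⟨1, 0, by simp⟩
  | succ n ih =>
    obtain ⟨u, v, h, e1, e2, e3, e4⟩ := ih
    have d := slz_det M
    refine ⟨u * trz M + v, -u, ?_, ?_, ?_, ?_, ?_⟩
    · rw [abs_neg]
      have h1 : |u| * |trz M| ≤ |u * trz M + v| + |v| := by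
        rw [← abs_mul]
        calc |u * trz M| = |(u * trz M + v) - v| := by ring_nf
          _ ≤ _ := abs_sub _ _
      nlinarith [abs_nonneg u, abs_nonneg v]
    all_goals
      rw [pow_succ, slz_mul]
      simp only [e1, e2, e3, e4, trz]
    · linear_combination (-u) * d
    · linear_combination (-u) * d
    · ring
    · ring

theorem slz_pow_comm {M A : SLZ} {k : ℕ} (hk : 1 ≤ k) (h : Commute (M ^ k) A) :
    Commute M A ∨ trz M ^ 2 ≤ 1 := by
  by_cases ht : 4 ≤ trz M ^ 2
  · left
    obtain ⟨n, rfl⟩ : ∃ n, k = n + 1 := ⟨k - 1, by omega⟩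
    obtain ⟨u, v, h0, e1, e2, e3, e4⟩ := slz_pow_form M ht n
    have hu : u ≠ 0 := by
      rintro rfl
      have := abs_nonneg v
      simp at h0; omega
    rw [slz_comm_iff, e1, e2, e3, e4] at h
    obtain ⟨h1, h2, h3⟩ := h
    rw [slz_comm_iff]
    refine ⟨?_, ?_, ?_⟩ <;> apply mul_left_cancel₀ hu <;> linarith
  · right
    have h1 : trz M < 2 := by nlinarith
    have h2 : -2 < trz M := by nlinarith
    have : trz M = -1 ∨ trz M = 0 ∨ trz M = 1 := by omega
    rcases this with h | h | h <;> rw [h] <;> norm_num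

theorem trz_negone (k : ℤ) (X : SLZ) (s : ℤ) (h : ((-1 : SLZ) ^ k).1 0 0 = s) :
    trz ((-1 : SLZ) ^ k * X) = s * trz X := by
  rcases negone_zpow k with e | e
  · rw [e] at h ⊢
    simp at h
    simp [← h]
  · rw [e] at h ⊢
    simp at h
    rw [← h]
    simp [trz]; ring

theorem trz_Nr {g : B3} (he : Even (esum g)) (ht : trz (brep g) ^ 2 ≤ 1) : trz (Nr g) = -1 := by
  have d := slz_det (brep g)
  have h1 : trz (brep g) < 2 := by nlinarith
  have h2 : -2 < trz (brep g) := by nlinarith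
  have h3 : trz (brep g) = 0 ∨ trz (brep g) ^ 2 = 1 := by
    have : trz (brep g) = -1 ∨ trz (brep g) = 0 ∨ trz (brep g) = 1 := by omega
    rcases this with h | h | h <;> rw [h] <;> norm_num
  rcases h3 with h0 | h0
  · exfalso
    have ht0 : (brep g).1 0 0 + (brep g).1 1 1 = 0 := h0
    have hd : (brep (g * g)).1 0 0 = -1 := by
      rw [map_mul, slz_mul]
      linear_combination (-1 : ℤ) * d + (brep g).1 0 0 * ht0
    obtain ⟨k, hk⟩ := brep_scalar (g := g * g)
      (by rw [map_mul, slz_mul]; linear_combination (brep g).1 0 1 * ht0)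
      (by rw [map_mul, slz_mul]; linear_combination (brep g).1 1 0 * ht0)
      (by rw [map_mul, slz_mul, slz_mul]
          linear_combination ((brep g).1 0 0 - (brep g).1 1 1) * ht0)
    have hs := congrArg esum hk
    rw [esum_mul, esum_zpow, esum_z] at hs
    have hke : Even k := by
      obtain ⟨m, hm⟩ := he
      rw [Int.even_iff]; omega
    rw [hk, map_zpow, brep_z, hke.neg_one_zpow] at hd
    simp at hd
  · obtain ⟨t, htd⟩ : ∃ t, t = trz (brep g) := ⟨_, rfl⟩
    rw [← htd] at h0
    have htd' : t = (brep g).1 0 0 + (brep g).1 1 1 := htd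
    have hd : (brep (g * g * g)).1 0 0 = -t := by
      rw [map_mul, map_mul, slz_mul, slz_mul, slz_mul]
      rw [htd'] at h0 ⊢
      linear_combination (brep g).1 0 0 * h0 - (2 * (brep g).1 0 0 + (brep g).1 1 1) * d
    obtain ⟨k, hk⟩ := brep_scalar (g := g * g * g)
      (by rw [map_mul, map_mul, slz_mul, slz_mul, slz_mul]
          rw [htd'] at h0
          linear_combination (brep g).1 0 1 * h0 - (brep g).1 0 1 * d)
      (by rw [map_mul, map_mul, slz_mul, slz_mul, slz_mul]
          rw [htd'] at h0
          linear_combination (brep g).1 1 0 * h0 - (brep g).1 1 0 * d)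
      (by rw [map_mul, map_mul, slz_mul, slz_mul, slz_mul, slz_mul, slz_mul, slz_mul]
          rw [htd'] at h0
          linear_combination ((brep g).1 0 0 - (brep g).1 1 1) * h0
            - ((brep g).1 0 0 - (brep g).1 1 1) * d)
    have hs := congrArg esum hk
    rw [esum_mul, esum_mul, esum_zpow, esum_z] at hs
    have hke : esum g / 2 = k := by omega
    rw [hk, map_zpow, brep_z] at hd
    rw [Nr, hke, trz_negone k _ _ hd, ← htd]
    linarith

/-! ### Hurwitz orbits -/

theorem orbit_step {n : ℕ} {G : Type*} [Group G] {s t : Fin n → G} (i : Fin (n - 1))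
    (h : t ∈ hurwitzOrbit s) : hEquiv i t ∈ hurwitzOrbit s := by
  obtain ⟨w, rfl⟩ := h
  exact ⟨w * FreeGroup.of i, by simp [hurwitzAct]⟩

theorem orbit_step_symm {n : ℕ} {G : Type*} [Group G] {s t : Fin n → G} (i : Fin (n - 1))
    (h : t ∈ hurwitzOrbit s) : (hEquiv i).symm t ∈ hurwitzOrbit s := by
  obtain ⟨w, rfl⟩ := h
  exact ⟨w * (FreeGroup.of i)⁻¹, by simp [hurwitzAct]⟩

theorem orbit_self {n : ℕ} {G : Type*} [Group G] (s : Fin n → G) : s ∈ hurwitzOrbit s :=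
  ⟨1, by simp [hurwitzAct]⟩

theorem orbit_sub {n : ℕ} {G : Type*} [Group G] {s t : Fin n → G}
    (h : t ∈ hurwitzOrbit s) : hurwitzOrbit t ⊆ hurwitzOrbit s := by
  obtain ⟨w, rfl⟩ := h
  rintro _ ⟨w', rfl⟩
  exact ⟨w * w', by simp [hurwitzAct]⟩

theorem h0_apply {G : Type*} [Group G] (a b c : G) :
    hEquiv (n := 3) (0 : Fin 2) ![a, b, c] = ![b, b⁻¹ * a * b, c] := by
  funext k; fin_cases k <;> simp [hEquiv]

theorem h1_apply {G : Type*} [Group G] (a b c : G) :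
    hEquiv (n := 3) (1 : Fin 2) ![a, b, c] = ![a, c, c⁻¹ * b * c] := by
  funext k; fin_cases k <;> simp [hEquiv]

theorem h0_symm_apply {G : Type*} [Group G] (a b c : G) :
    (hEquiv (n := 3) (0 : Fin 2)).symm ![a, b, c] = ![a * b * a⁻¹, a, c] := by
  rw [Equiv.symm_apply_eq, h0_apply]
  congr 2
  group

theorem orbit_periodic {G : Type*} [Group G] {s : Fin 3 → G} (hs : (hurwitzOrbit s).Finite)
    (f : Equiv.Perm (Fin 3 → G)) (hf : ∀ t ∈ hurwitzOrbit s, f t ∈ hurwitzOrbit s)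
    (T : ℕ → Fin 3 → G) (h0 : T 0 = s) (hT : ∀ n, f (T n) = T (n + 1)) :
    ∃ k, 1 ≤ k ∧ T k = s := by
  have hmem : ∀ n, T n ∈ hurwitzOrbit s := by
    intro n
    induction n with
    | zero => rw [h0]; exact orbit_self s
    | succ n ih => rw [← hT]; exact hf _ ih
  have hback : ∀ m n, T m = T (m + n) → T 0 = T n := by
    intro m
    induction m with
    | zero => intro n h; simpa using h
    | succ m ih =>
      intro n h
      apply ih
      apply f.injective
      rw [hT, hT, h]; congr 1; ring
  obtain ⟨m, n, hlt, he⟩ := hs.exists_lt_map_eq_of_forall_mem hmem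
  refine ⟨n - m, by omega, ?_⟩
  rw [← h0]
  exact (hback m (n - m) (by rw [he]; congr 1; omega)).symm

theorem comm_of_conj {G : Type*} [Group G] {p a : G} {k : ℕ} (h : (p ^ k)⁻¹ * a * p ^ k = a) :
    Commute (p ^ k) a := by
  show _ = _
  rw [mul_assoc, inv_mul_eq_iff_eq_mul] at h
  exact h.symm

theorem h00_apply {G : Type*} [Group G] (x y z p : G) (hp : x * y = p) :
    (hEquiv (n := 3) (0 : Fin 2) * hEquiv (n := 3) (0 : Fin 2) :
      Equiv.Perm (Fin 3 → G)) ![x, y, z]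
      = ![p⁻¹ * x * p, p⁻¹ * y * p, z] := by
  subst hp
  rw [Equiv.Perm.mul_apply, h0_apply, h0_apply]
  congr 1
  · group
  congr 1
  group

theorem h11_apply {G : Type*} [Group G] (x y z p : G) (hp : y * z = p) :
    (hEquiv (n := 3) (1 : Fin 2) * hEquiv (n := 3) (1 : Fin 2) :
      Equiv.Perm (Fin 3 → G)) ![x, y, z]
      = ![x, p⁻¹ * y * p, p⁻¹ * z * p] := by
  subst hp
  rw [Equiv.Perm.mul_apply, h1_apply, h1_apply]
  congr 2
  · group
  congr 1
  group

theorem conj_pow_mul {G : Type*} [Group G] (a b p : G) (hp : a * b = p) (n : ℕ) :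
    ((p ^ n)⁻¹ * a * p ^ n) * ((p ^ n)⁻¹ * b * p ^ n) = p := by
  calc _ = (p ^ n)⁻¹ * (a * b) * p ^ n := by group
    _ = p := by rw [hp]; group

theorem conj_pow_succ {G : Type*} [Group G] (a p : G) (n : ℕ) :
    p⁻¹ * ((p ^ n)⁻¹ * a * p ^ n) * p = (p ^ (n + 1))⁻¹ * a * p ^ (n + 1) := by
  rw [pow_succ]; group

theorem orbit_12 {G : Type*} [Group G] {a b c : G} (h : (hurwitzOrbit ![a, b, c]).Finite) :
    ∃ k, 1 ≤ k ∧ Commute ((a * b) ^ k) a := by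
  obtain ⟨k, hk, he⟩ := orbit_periodic h
    (hEquiv (n := 3) (0 : Fin 2) * hEquiv (n := 3) (0 : Fin 2))
    (fun t ht => orbit_step _ (orbit_step _ ht))
    (fun n => ![((a * b) ^ n)⁻¹ * a * (a * b) ^ n, ((a * b) ^ n)⁻¹ * b * (a * b) ^ n, c])
    (by simp) (by
      intro n
      rw [h00_apply _ _ _ _ (conj_pow_mul a b _ rfl n), conj_pow_succ, conj_pow_succ])
  exact ⟨k, hk, comm_of_conj (congrFun he 0)⟩

theorem orbit_23 {G : Type*} [Group G] {a b c : G} (h : (hurwitzOrbit ![a, b, c]).Finite) :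
    ∃ k, 1 ≤ k ∧ Commute ((b * c) ^ k) b := by
  obtain ⟨k, hk, he⟩ := orbit_periodic h
    (hEquiv (n := 3) (1 : Fin 2) * hEquiv (n := 3) (1 : Fin 2))
    (fun t ht => orbit_step _ (orbit_step _ ht))
    (fun n => ![a, ((b * c) ^ n)⁻¹ * b * (b * c) ^ n, ((b * c) ^ n)⁻¹ * c * (b * c) ^ n])
    (by simp) (by
      intro n
      rw [h11_apply _ _ _ _ (conj_pow_mul b c _ rfl n), conj_pow_succ, conj_pow_succ])
  exact ⟨k, hk, comm_of_conj (congrFun he 1)⟩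

theorem orbit_123 {G : Type*} [Group G] {a b c : G} (h : (hurwitzOrbit ![a, b, c]).Finite) :
    ∃ k, 1 ≤ k ∧ Commute ((a * b * c) ^ k) a ∧ Commute ((a * b * c) ^ k) b ∧
      Commute ((a * b * c) ^ k) c := by
  obtain ⟨τ, hτ⟩ : ∃ τ, τ = hEquiv (G := G) (n := 3) (1 : Fin 2) * hEquiv (n := 3) (0 : Fin 2) :=
    ⟨_, rfl⟩
  have hτm : ∀ t ∈ hurwitzOrbit ![a, b, c], τ t ∈ hurwitzOrbit ![a, b, c] := by
    rw [hτ]; exact fun t ht => orbit_step _ (orbit_step _ ht)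
  have hτa : ∀ x y z : G, τ ![x, y, z] = ![y, z, (y * z)⁻¹ * x * (y * z)] := by
    intro x y z
    rw [hτ, Equiv.Perm.mul_apply, h0_apply, h1_apply]
    congr 3
    group
  have hτ3 : ∀ x y z p : G, x * y * z = p →
      (τ * τ * τ) ![x, y, z] = ![p⁻¹ * x * p, p⁻¹ * y * p, p⁻¹ * z * p] := by
    rintro x y z p rfl
    rw [Equiv.Perm.mul_apply, Equiv.Perm.mul_apply, hτa, hτa, hτa]
    congr 1
    · group
    congr 1
    · group
    congr 1
    group
  obtain ⟨k, hk, he⟩ := orbit_periodic h (τ * τ * τ)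
    (fun t ht => hτm _ (hτm _ (hτm _ ht)))
    (fun n => ![((a * b * c) ^ n)⁻¹ * a * (a * b * c) ^ n,
      ((a * b * c) ^ n)⁻¹ * b * (a * b * c) ^ n, ((a * b * c) ^ n)⁻¹ * c * (a * b * c) ^ n])
    (by simp) (by
      intro n
      generalize hp : a * b * c = p
      rw [hτ3 _ _ _ p ?_]
      · congr 1
        · simp only [pow_succ]; group
        congr 1
        · simp only [pow_succ]; group
        congr 1
        simp only [pow_succ]; group
      · calc _ = (p ^ n)⁻¹ * (a * b * c) * p ^ n := by group
          _ = p := by rw [hp]; group)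
  exact ⟨k, hk, comm_of_conj (congrFun he 0), comm_of_conj (congrFun he 1),
    comm_of_conj (congrFun he 2)⟩

/-! ### Assembly -/

def Red3 {G : Type*} [Group G] (a b c : G) : Prop :=
  (Commute a b ∧ Commute a c) ∨ (Commute a b ∧ Commute b c) ∨ (Commute a c ∧ Commute b c)

theorem conj_comm1 {G : Type*} [Group G] {a b : G} (h : Commute (a * b * a⁻¹) a) :
    Commute b a := by
  have h' : a * b * a⁻¹ * a = a * (a * b * a⁻¹) := h
  show _ = _
  have : b * a = a⁻¹ * (a * b * a⁻¹ * a) * a := by group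
  rw [this, h']; group

theorem conj_eq1 {G : Type*} [Group G] {a b : G} (h : Commute b a) : a * b * a⁻¹ = b := by
  rw [← h.eq]; group

theorem Red3_m1 {G : Type*} [Group G] {a b c : G} (h : Red3 (a * b * a⁻¹) a c) :
    Red3 a b c := by
  rcases h with ⟨h1, h2⟩ | ⟨h1, h2⟩ | ⟨h1, h2⟩
  · have := conj_comm1 h1
    rw [conj_eq1 this] at h2
    exact Or.inr (Or.inl ⟨this.symm, h2⟩)
  · exact Or.inl ⟨(conj_comm1 h1).symm, h2⟩
  · refine Or.inr (Or.inr ⟨h2, ?_⟩)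
    have : b = a⁻¹ * (a * b * a⁻¹) * a := by group
    rw [this]
    exact (h2.inv_left.mul_left h1).mul_left h2

theorem Red3_m1' {G : Type*} [Group G] {a b c : G} (h : Red3 b (b⁻¹ * a * b) c) :
    Red3 a b c := by
  have key : Commute (b⁻¹ * a * b) b → Commute a b := by
    intro h
    have h2 : Commute (b⁻¹ * a * (b⁻¹)⁻¹) b⁻¹ := by rw [inv_inv]; exact h.inv_right
    simpa using (conj_comm1 h2).inv_right
  have keq : Commute a b → b⁻¹ * a * b = a := by
    intro h
    rw [mul_assoc, h.eq]; group
  rcases h with ⟨h1, h2⟩ | ⟨h1, h2⟩ | ⟨h1, h2⟩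
  · exact Or.inr (Or.inl ⟨key h1.symm, h2⟩)
  · have := key h1.symm
    rw [keq this] at h2
    exact Or.inl ⟨this, h2⟩
  · refine Or.inr (Or.inr ⟨?_, h1⟩)
    have : a = b * (b⁻¹ * a * b) * b⁻¹ := by group
    rw [this]
    exact (h1.mul_left h2).mul_left h1.inv_left

theorem Red3_m2 {G : Type*} [Group G] {a b c : G} (h : Red3 a c (c⁻¹ * b * c)) :
    Red3 a b c := by
  have h' : Red3 c (c⁻¹ * b * c) a := by
    rcases h with ⟨h1, h2⟩ | ⟨h1, h2⟩ | ⟨h1, h2⟩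
    · exact Or.inr (Or.inr ⟨h1.symm, h2.symm⟩)
    · exact Or.inl ⟨h2, h1.symm⟩
    · exact Or.inr (Or.inl ⟨h2, h1.symm⟩)
  rcases Red3_m1' h' with ⟨h1, h2⟩ | ⟨h1, h2⟩ | ⟨h1, h2⟩
  · exact Or.inr (Or.inl ⟨h2.symm, h1⟩)
  · exact Or.inr (Or.inr ⟨h2.symm, h1⟩)
  · exact Or.inl ⟨h1.symm, h2.symm⟩

structure Good (a b c : B3) : Prop where
  ea : Even (esum a)
  eb : Even (esum b)
  ec : Even (esum c)
  irr : ¬ Red3 a b c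
  fin : (hurwitzOrbit ![a, b, c]).Finite

theorem esum_conj (a b : B3) : esum (a * b * a⁻¹) = esum b := by
  rw [esum_mul, esum_mul, esum_inv]; ring

theorem esum_conj' (a b : B3) : esum (a⁻¹ * b * a) = esum b := by
  rw [esum_mul, esum_mul, esum_inv]; ring

theorem even_mul {a b : B3} (ha : Even (esum a)) (hb : Even (esum b)) :
    Even (esum (a * b)) := by
  rw [esum_mul]; exact ha.add hb

theorem even_inv {a : B3} (ha : Even (esum a)) : Even (esum a⁻¹) := by
  rw [esum_inv]; exact ha.neg

theorem Good.m1 {a b c : B3} (h : Good a b c) : Good (a * b * a⁻¹) a c :=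
  ⟨by rw [esum_conj]; exact h.eb, h.ea, h.ec, fun hr => h.irr (Red3_m1 hr),
    h.fin.subset (orbit_sub (by rw [← h0_symm_apply]; exact orbit_step_symm _ (orbit_self _)))⟩

theorem Good.m1' {a b c : B3} (h : Good a b c) : Good b (b⁻¹ * a * b) c :=
  ⟨h.eb, by rw [esum_conj']; exact h.ea, h.ec, fun hr => h.irr (Red3_m1' hr),
    h.fin.subset (orbit_sub (by rw [← h0_apply]; exact orbit_step _ (orbit_self _)))⟩

theorem Good.m2 {a b c : B3} (h : Good a b c) : Good a c (c⁻¹ * b * c) :=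
  ⟨h.ea, h.ec, by rw [esum_conj']; exact h.eb, fun hr => h.irr (Red3_m2 hr),
    h.fin.subset (orbit_sub (by rw [← h1_apply]; exact orbit_step _ (orbit_self _)))⟩

theorem pair_trace {a b : B3} (ha : Even (esum a)) (hb : Even (esum b)) {k : ℕ} (hk : 1 ≤ k)
    (h : Commute ((a * b) ^ k) a) (hn : ¬ Commute (Nr a) (Nr b)) : trz (Nr a * Nr b) = -1 := by
  rw [← Nr_mul ha]
  apply trz_Nr (even_mul ha hb)
  have h' : Commute (brep (a * b) ^ k) (brep a) := by
    rw [← map_pow]; exact h.map brep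
  refine (slz_pow_comm hk h').resolve_left ?_
  intro hc
  apply hn
  rw [Nr_comm_iff]
  have : brep b = (brep a)⁻¹ * brep (a * b) := by rw [map_mul]; group
  rw [this]
  exact (Commute.refl _).inv_right.mul_right hc.symm

theorem no_good (a b c : B3) : ¬ Good a b c := by
  intro h
  refine slz_core (fun A B C => ∃ a b c, Good a b c ∧ Nr a = A ∧ Nr b = B ∧ Nr c = C)
    ?_ ?_ ?_ ?_ ?_ ?_ ?_ ?_ (Nr a) (Nr b) (Nr c) ⟨a, b, c, h, rfl, rfl, rfl⟩
  · rintro _ _ _ ⟨a, b, c, h, rfl, rfl, rfl⟩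
    refine ⟨_, _, _, h.m1, ?_, rfl, rfl⟩
    rw [Nr_mul (even_mul h.ea h.eb), Nr_mul h.ea, Nr_inv h.ea]
  · rintro _ _ _ ⟨a, b, c, h, rfl, rfl, rfl⟩
    refine ⟨_, _, _, h.m1', rfl, ?_, rfl⟩
    rw [Nr_mul (even_mul (even_inv h.eb) h.ea), Nr_mul (even_inv h.eb), Nr_inv h.eb]
  · rintro _ _ _ ⟨a, b, c, h, rfl, rfl, rfl⟩
    refine ⟨_, _, _, h.m2, rfl, rfl, ?_⟩
    rw [Nr_mul (even_mul (even_inv h.ec) h.eb), Nr_mul (even_inv h.ec), Nr_inv h.ec]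
  · rintro _ _ _ ⟨a, b, c, h, rfl, rfl, rfl⟩ ⟨h1, h2⟩
    rw [Nr_comm_iff] at h1 h2
    exact h.irr (Or.inr (Or.inl ⟨comm_of_brep h1, comm_of_brep h2⟩))
  · rintro _ _ _ ⟨a, b, c, h, rfl, rfl, rfl⟩ ⟨h1, h2⟩
    rw [Nr_comm_iff] at h1 h2
    exact h.irr (Or.inr (Or.inr ⟨comm_of_brep h1, comm_of_brep h2⟩))
  · rintro _ _ _ ⟨a, b, c, h, rfl, rfl, rfl⟩ hn
    obtain ⟨k, hk, hc⟩ := orbit_12 h.fin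
    exact pair_trace h.ea h.eb hk hc hn
  · rintro _ _ _ ⟨a, b, c, h, rfl, rfl, rfl⟩ hn
    obtain ⟨k, hk, hc⟩ := orbit_23 h.fin
    exact pair_trace h.eb h.ec hk hc hn
  · rintro _ _ _ ⟨a, b, c, h, rfl, rfl, rfl⟩
    obtain ⟨k, hk, ha, hb, -⟩ := orbit_123 h.fin
    have he := even_mul (even_mul h.ea h.eb) h.ec
    rw [← Nr_mul h.ea, ← Nr_mul (even_mul h.ea h.eb)]
    have ha' : Commute (brep (a * b * c) ^ k) (brep a) := by
      rw [← map_pow]; exact ha.map brep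
    have hb' : Commute (brep (a * b * c) ^ k) (brep b) := by
      rw [← map_pow]; exact hb.map brep
    rcases slz_pow_comm hk ha' with ha2 | ht
    swap
    · exact Or.inr (trz_Nr he ht)
    rcases slz_pow_comm hk hb' with hb2 | ht
    swap
    · exact Or.inr (trz_Nr he ht)
    by_cases hs : (brep (a * b * c)).1 0 1 = 0 ∧ (brep (a * b * c)).1 1 0 = 0 ∧
        (brep (a * b * c)).1 0 0 = (brep (a * b * c)).1 1 1
    · exact Or.inl (Nr_scalar he hs.1 hs.2.1 hs.2.2)
    · exfalso
      have hab := slz_trans hs ha2 hb2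
      have hac : Commute (brep a) (brep c) := by
        have : brep c = (brep a * brep b)⁻¹ * brep (a * b * c) := by
          rw [map_mul, map_mul]; group
        rw [this]
        exact ((Commute.refl _).mul_right hab).inv_right.mul_right ha2.symm
      exact h.irr (Or.inl ⟨comm_of_brep hab, comm_of_brep hac⟩)

theorem red_of_red3 (s : Fin 3 → B3) (h : Red3 (s 0) (s 1) (s 2)) : IsReducible s := by
  rcases h with ⟨h1, h2⟩ | ⟨h1, h2⟩ | ⟨h1, h2⟩
  · refine ⟨{0}, ⟨0, rfl⟩, ⟨1, by simp⟩, ?_⟩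
    rintro i rfl j hj
    fin_cases j
    · exact absurd rfl hj
    · exact h1
    · exact h2
  · refine ⟨{1}, ⟨1, rfl⟩, ⟨0, by simp⟩, ?_⟩
    rintro i rfl j hj
    fin_cases j
    · exact h1.symm
    · exact absurd rfl hj
    · exact h2
  · refine ⟨{2}, ⟨2, rfl⟩, ⟨0, by simp⟩, ?_⟩
    rintro i rfl j hj
    fin_cases j
    · exact h1.symm
    · exact h2.symm
    · exact absurd rfl hj

theorem no_even (s : Fin 3 → B3) (hi : ¬ IsReducible s) (hf : (hurwitzOrbit s).Finite)
    (he : ∀ p, Even (esum (s p))) : False := by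
  have hs : s = ![s 0, s 1, s 2] := by
    funext k; fin_cases k <;> rfl
  exact no_good (s 0) (s 1) (s 2) ⟨he 0, he 1, he 2, fun h => hi (red_of_red3 s h), hs ▸ hf⟩

theorem even_of_zero {x : ℤ} (h : Int.ModEq 6 x 0) : Even x := by
  unfold Int.ModEq at h; rw [Int.even_iff]; omega

theorem even_of_two {x : ℤ} (h : PMTwo x) : Even x := by
  unfold PMTwo Int.ModEq at h; rw [Int.even_iff]; omega

/-- No irreducible system with finite Hurwitz orbit has exponent sums
congruent (mod 6, in some order) to `(0, ±2, ±2)`; consequently, every irreducible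
`(3,3)`-periodic system with finite Hurwitz orbit has all exponent sums `≡ ±1 (mod 6)`. -/
theorem period33_exponent_sums :
    (∀ s : Fin 3 → BraidGroup 3, ¬ IsReducible s → (hurwitzOrbit s).Finite →
      ¬ ∃ σ : Equiv.Perm (Fin 3),
          Int.ModEq 6 (esum (s (σ 0))) 0 ∧ PMTwo (esum (s (σ 1))) ∧
            PMTwo (esum (s (σ 2)))) ∧
    (∀ s : Fin 3 → BraidGroup 3, ¬ IsReducible s → (hurwitzOrbit s).Finite →
      Is33Periodic s → ∀ p : Fin 3, PMOne (esum (s p))) := by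
  constructor
  · rintro s hi hf ⟨σ, h0, h1, h2⟩
    refine no_even s hi hf ?_
    intro p
    obtain ⟨q, rfl⟩ := σ.surjective p
    fin_cases q
    · exact even_of_zero h0
    · exact even_of_two h1
    · exact even_of_two h2
  · intro s hi hf h p
    rcases h with ⟨h0, h1, h2⟩ | ⟨h0, h1, h2⟩ | ⟨h0, h1, h2⟩ | ⟨h0, h1, h2⟩
    · refine (no_even s hi hf ?_).elim
      intro p
      fin_cases p
      · exact even_of_zero h0
      · exact even_of_two h1
      · exact even_of_two h2
    · refine (no_even s hi hf ?_).elim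
      intro p
      fin_cases p
      · exact even_of_two h0
      · exact even_of_zero h1
      · exact even_of_two h2
    · refine (no_even s hi hf ?_).elim
      intro p
      fin_cases p
      · exact even_of_two h0
      · exact even_of_two h1
      · exact even_of_zero h2
    · fin_cases p
      · exact h0
      · exact h1
      · exact h2
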